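/- For all positive integers a and b with a ≠ b, R⁻(a,b) = −(1/2)^{a+b} / (min(a,b) · B(a,b)), and for every positive integer a, R⁻(a,a) = (1/2)^{2a} / (a · B(a,a)). Consequently, for positive integers a, b, R⁻(a,b) > 0 if and only if a = b. -/

import Mathlib

/-- The Beta function `B(a,b) = ∫₀¹ t^(a-1) (1-t)^(b-1) dt`. -/
noncomputable def betaFn (a b : ℝ) : ℝ := ∫ t in (0:ℝ)..1, t ^ (a - 1) * (1 - t) ^ (b - 1)

/-- `I(a,b)`: the probability that a `Beta(a,b)` random variable is `≥ 1/2`. -/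
noncomputable def I (a b : ℝ) : ℝ :=
  (1 / betaFn a b) * ∫ t in (1/2 : ℝ)..1, t ^ (a - 1) * (1 - t) ^ (b - 1)

/-- `h(x) = max (x, 1-x)`. -/
noncomputable def hFn (x : ℝ) : ℝ := max x (1 - x)

/-- Expected stage-wise reward. -/
noncomputable def R (a b : ℝ) : ℝ :=
  a / (a + b) * (hFn (I (a + 1) b) - hFn (I a b)) +
    b / (a + b) * (hFn (I a (b + 1)) - hFn (I a b))

/-- Optimistic knowledge-gradient reward. -/
noncomputable def Rplus (a b : ℝ) : ℝ :=
  max (hFn (I (a + 1) b) - hFn (I a b)) (hFn (I a (b + 1)) - hFn (I a b))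

/-- Pessimistic knowledge-gradient reward. -/
noncomputable def Rminus (a b : ℝ) : ℝ :=
  min (hFn (I (a + 1) b) - hFn (I a b)) (hFn (I a (b + 1)) - hFn (I a b))

/-!
Integrating the derivative of `t ^ a * (1 - t) ^ b` shows that an extra success moves `I a b` up by
`(1/2) ^ (a + b) / (a * betaFn a b)`; the reflection `t ↦ 1 - t` gives `I b a = 1 - I a b`, so an
extra failure moves it down by `(1/2) ^ (a + b) / (b * betaFn a b)`. By symmetry let `b ≤ a`, so
that `1/2 ≤ I a b`. If `b + 1 ≤ a`, then `I` stays at least `1/2` after a failure, where `hFn` is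
the identity, and the minimum is the loss caused by that failure. If `a = b`, then `I a b = 1/2`
and either outcome gains the same amount.
-/

open MeasureTheory (volume)
open Set intervalIntegral

/-- The upper incomplete Beta function. At `c = 0` it is `betaFn` by definition, and at `c = 1 / 2`
it is the unnormalized probability in `I`. -/
noncomputable def upperBeta (c a b : ℝ) : ℝ :=
  ∫ t in c..1, t ^ (a - 1) * (1 - t) ^ (b - 1)

section UpperBeta

variable {a b c : ℝ}

lemma intervalIntegrable_rpow_mul_one_sub_rpow (ha : 0 < a) (hb : 0 < b) {d : ℝ}
    (hc : c ∈ Icc (0 : ℝ) 1) (hd : d ∈ Icc (0 : ℝ) 1) :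
    IntervalIntegrable (fun t : ℝ ↦ t ^ (a - 1) * (1 - t) ^ (b - 1)) volume c d := by
  have left {p q : ℝ} (hp : 0 < p) :
      IntervalIntegrable (fun t : ℝ ↦ t ^ (p - 1) * (1 - t) ^ (q - 1)) volume 0 (1 / 2) := by
    refine (intervalIntegrable_rpow' (by linarith)).mul_continuousOn ?_
    refine (continuousOn_const.sub continuousOn_id).rpow_const fun t ht ↦ Or.inl ?_
    rw [uIcc_of_le (by norm_num)] at ht
    exact (by linarith [ht.2] : 0 < 1 - t).ne'
  have right : IntervalIntegrable (fun t : ℝ ↦ t ^ (a - 1) * (1 - t) ^ (b - 1))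
      volume (1 / 2) 1 := by
    simpa only [sub_zero, sub_half, sub_sub_cancel, mul_comm] using
      ((left (q := a) hb).comp_sub_left 1).symm
  refine ((left ha).trans right).mono_set ?_
  rw [uIcc_of_le zero_le_one]
  exact uIcc_subset_Icc hc hd

lemma upperBeta_pos (ha : 0 < a) (hb : 0 < b) (hc₀ : 0 ≤ c) (hc₁ : c < 1) :
    0 < upperBeta c a b := by
  refine intervalIntegral_pos_of_pos_on (intervalIntegrable_rpow_mul_one_sub_rpow ha hb
    ⟨hc₀, hc₁.le⟩ (right_mem_Icc.2 zero_le_one)) (fun t ht ↦ ?_) hc₁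
  have : 0 < t := hc₀.trans_lt ht.1
  have : 0 < 1 - t := sub_pos.2 ht.2
  positivity

lemma upperBeta_add_upperBeta_one_sub (ha : 0 < a) (hb : 0 < b) (hc : c ∈ Icc (0 : ℝ) 1) :
    upperBeta c a b + upperBeta (1 - c) b a = betaFn a b := by
  have reflect : upperBeta (1 - c) b a = ∫ t in (0 : ℝ)..c, t ^ (a - 1) * (1 - t) ^ (b - 1) := by
    simpa [upperBeta, mul_comm] using
      (integral_comp_sub_left (a := 0) (b := c)
        (fun t : ℝ ↦ t ^ (b - 1) * (1 - t) ^ (a - 1)) 1).symm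
  rw [reflect, add_comm]
  exact integral_add_adjacent_intervals
    (intervalIntegrable_rpow_mul_one_sub_rpow ha hb (left_mem_Icc.2 zero_le_one) hc)
    (intervalIntegrable_rpow_mul_one_sub_rpow ha hb hc (right_mem_Icc.2 zero_le_one))

/-- The exponent `a + 1 - 1` is the one in the integrand of `upperBeta c (a + 1) b`. -/
lemma hasDerivAt_rpow_mul_one_sub_rpow (a b : ℝ) {t : ℝ} (ht : t ∈ Ioo (0 : ℝ) 1) :
    HasDerivAt (fun t : ℝ ↦ t ^ a * (1 - t) ^ b)
      (a * (t ^ (a - 1) * (1 - t) ^ (b - 1)) -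
        (a + b) * (t ^ (a + 1 - 1) * (1 - t) ^ (b - 1))) t := by
  have ht₀ : t ≠ 0 := ht.1.ne'
  have ht₁ : 1 - t ≠ 0 := (sub_pos.2 ht.2).ne'
  have hpow : HasDerivAt (fun t : ℝ ↦ t ^ a) (a * t ^ (a - 1)) t :=
    Real.hasDerivAt_rpow_const (Or.inl ht₀)
  have hpow_sub : HasDerivAt (fun t : ℝ ↦ (1 - t) ^ b) (-1 * b * (1 - t) ^ (b - 1)) t :=
    ((hasDerivAt_id t).const_sub 1).rpow_const (Or.inl ht₁)
  refine (hpow.mul hpow_sub).congr_deriv ?_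
  rw [add_sub_cancel_right, Real.rpow_sub_one ht₀, Real.rpow_sub_one ht₁]
  field

lemma add_mul_upperBeta_add_one (ha : 0 < a) (hb : 0 < b) (hc : c ∈ Icc (0 : ℝ) 1) :
    (a + b) * upperBeta c (a + 1) b = a * upperBeta c a b + c ^ a * (1 - c) ^ b := by
  have hintegrable {p : ℝ} (hp : 0 < p) :
      IntervalIntegrable (fun t : ℝ ↦ t ^ (p - 1) * (1 - t) ^ (b - 1)) volume c 1 :=
    intervalIntegrable_rpow_mul_one_sub_rpow hp hb hc (right_mem_Icc.2 zero_le_one)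
  have hleft := (hintegrable ha).const_mul a
  have hright := (hintegrable (by linarith : 0 < a + 1)).const_mul (a + b)
  have hcont : ContinuousOn (fun t : ℝ ↦ t ^ a * (1 - t) ^ b) (Icc c 1) :=
    ((Real.continuous_rpow_const ha.le).mul
      ((Real.continuous_rpow_const hb.le).comp (continuous_const.sub continuous_id))).continuousOn
  have ftc := integral_eq_sub_of_hasDerivAt_of_le hc.2 hcont
    (fun t ht ↦ hasDerivAt_rpow_mul_one_sub_rpow a b ⟨hc.1.trans_lt ht.1, ht.2⟩)
    (hleft.sub hright)
  rw [integral_sub hleft hright, integral_const_mul, integral_const_mul, sub_self,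
    Real.zero_rpow hb.ne', mul_zero, zero_sub] at ftc
  unfold upperBeta
  linarith

lemma upperBeta_swap_le (hb : 0 < b) (hab : b ≤ a) (hc : c ∈ Icc (1 / 2 : ℝ) 1) :
    upperBeta c b a ≤ upperBeta c a b := by
  have ha : 0 < a := hb.trans_le hab
  have hc' : c ∈ Icc (0 : ℝ) 1 := ⟨by linarith [hc.1], hc.2⟩
  have h₁ : (1 : ℝ) ∈ Icc (0 : ℝ) 1 := right_mem_Icc.2 zero_le_one
  refine integral_mono_on_of_le_Ioo hc.2 (intervalIntegrable_rpow_mul_one_sub_rpow hb ha hc' h₁)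
    (intervalIntegrable_rpow_mul_one_sub_rpow ha hb hc' h₁) fun t ht ↦ ?_
  have ht₀ : 0 < t := by linarith [hc.1, ht.1]
  have ht₁ : 0 < 1 - t := sub_pos.2 ht.2
  calc t ^ (b - 1) * (1 - t) ^ (a - 1)
      = (t * (1 - t)) ^ (b - 1) * (1 - t) ^ (a - b) := by
        rw [Real.mul_rpow ht₀.le ht₁.le, mul_assoc, ← Real.rpow_add ht₁]; ring_nf
    _ ≤ (t * (1 - t)) ^ (b - 1) * t ^ (a - b) := by
        have : 1 - t ≤ t := by linarith [hc.1, ht.1]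
        gcongr
    _ = t ^ (a - 1) * (1 - t) ^ (b - 1) := by
        rw [Real.mul_rpow ht₀.le ht₁.le, mul_right_comm, ← Real.rpow_add ht₀]; ring_nf

end UpperBeta

section BetaProbability

variable {a b : ℝ}

lemma betaFn_pos (ha : 0 < a) (hb : 0 < b) : 0 < betaFn a b :=
  upperBeta_pos ha hb le_rfl one_pos

lemma betaFn_comm (ha : 0 < a) (hb : 0 < b) : betaFn a b = betaFn b a := by
  have hhalf : (1 / 2 : ℝ) ∈ Icc (0 : ℝ) 1 := by norm_num
  rw [← upperBeta_add_upperBeta_one_sub ha hb hhalf, ← upperBeta_add_upperBeta_one_sub hb ha hhalf,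
    sub_half, add_comm]

lemma add_mul_betaFn_add_one (ha : 0 < a) (hb : 0 < b) :
    (a + b) * betaFn (a + 1) b = a * betaFn a b := by
  have h := add_mul_upperBeta_add_one ha hb (left_mem_Icc.2 zero_le_one)
  rwa [Real.zero_rpow ha.ne', zero_mul, add_zero] at h

lemma I_eq_upperBeta_div_betaFn (a b : ℝ) : I a b = upperBeta (1 / 2) a b / betaFn a b :=
  one_div_mul_eq_div _ _

lemma I_add_I_swap (ha : 0 < a) (hb : 0 < b) : I a b + I b a = 1 := by
  have h := upperBeta_add_upperBeta_one_sub ha hb (c := 1 / 2) (by norm_num)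
  rw [sub_half] at h
  rw [I_eq_upperBeta_div_betaFn, I_eq_upperBeta_div_betaFn, betaFn_comm hb ha, ← add_div, h,
    div_self (betaFn_pos ha hb).ne']

lemma I_add_one_left (ha : 0 < a) (hb : 0 < b) :
    I (a + 1) b = I a b + (1 / 2) ^ (a + b) / (a * betaFn a b) := by
  have hupper := add_mul_upperBeta_add_one ha hb (c := 1 / 2) (by norm_num)
  rw [sub_half, ← Real.rpow_add one_half_pos] at hupper
  have hab : a + b ≠ 0 := (add_pos ha hb).ne'
  have hbeta : betaFn a b ≠ 0 := (betaFn_pos ha hb).ne'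
  rw [I_eq_upperBeta_div_betaFn, I_eq_upperBeta_div_betaFn, ← mul_div_mul_left _ _ hab, hupper,
    add_mul_betaFn_add_one ha hb]
  field

lemma I_add_one_right (ha : 0 < a) (hb : 0 < b) :
    I a (b + 1) = I a b - (1 / 2) ^ (a + b) / (b * betaFn a b) := by
  have hswap := I_add_I_swap ha hb
  have hswap_add_one := I_add_I_swap ha (add_pos hb one_pos)
  have hstep := I_add_one_left hb ha
  rw [betaFn_comm hb ha, add_comm b a] at hstep
  linarith

lemma half_le_I (hb : 0 < b) (hab : b ≤ a) : 1 / 2 ≤ I a b := by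
  have ha : 0 < a := hb.trans_le hab
  have hswap_le : I b a ≤ I a b := by
    rw [I_eq_upperBeta_div_betaFn, I_eq_upperBeta_div_betaFn, betaFn_comm hb ha]
    exact div_le_div_of_nonneg_right (upperBeta_swap_le hb hab (by norm_num))
      (betaFn_pos ha hb).le
  linarith [I_add_I_swap ha hb]

end BetaProbability

lemma hFn_of_half_le {x : ℝ} (hx : 1 / 2 ≤ x) : hFn x = x :=
  max_eq_left (by linarith)

lemma hFn_one_sub (x : ℝ) : hFn (1 - x) = hFn x := by
  rw [hFn, hFn, sub_sub_cancel, max_comm]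

section PessimisticReward

variable {a b : ℝ}

lemma hFn_I_comm (ha : 0 < a) (hb : 0 < b) : hFn (I a b) = hFn (I b a) := by
  rw [← hFn_one_sub (I b a), ← I_add_I_swap ha hb, add_sub_cancel_right]

lemma Rminus_comm (ha : 0 < a) (hb : 0 < b) : Rminus a b = Rminus b a := by
  rw [Rminus, Rminus, min_comm, hFn_I_comm ha hb, hFn_I_comm ha (add_pos hb one_pos),
    hFn_I_comm (add_pos ha one_pos) hb]

lemma Rminus_self (ha : 0 < a) : Rminus a a = (1 / 2) ^ (2 * a) / (a * betaFn a a) := by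
  have hI : 1 / 2 ≤ I a a := half_le_I ha le_rfl
  have hI_add_one : 1 / 2 ≤ I (a + 1) a := half_le_I ha (by linarith)
  rw [Rminus, hFn_I_comm ha (add_pos ha one_pos), min_self, hFn_of_half_le hI,
    hFn_of_half_le hI_add_one, I_add_one_left ha ha, add_sub_cancel_left, two_mul]

lemma Rminus_of_add_one_le (hb : 0 < b) (hab : b + 1 ≤ a) :
    Rminus a b = -((1 / 2) ^ (a + b) / (b * betaFn a b)) := by
  have ha : 0 < a := by linarith
  have hbeta : 0 < betaFn a b := betaFn_pos ha hb
  have hloss : 0 < (1 / 2) ^ (a + b) / (b * betaFn a b) := by positivity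
  have hgain : 0 < (1 / 2) ^ (a + b) / (a * betaFn a b) := by positivity
  rw [Rminus, hFn_of_half_le (half_le_I hb (by linarith : b ≤ a)),
    hFn_of_half_le (half_le_I hb (by linarith : b ≤ a + 1)),
    hFn_of_half_le (half_le_I (add_pos hb one_pos) hab),
    I_add_one_left ha hb, I_add_one_right ha hb, min_eq_right (by linarith)]
  ring

lemma Rminus_of_one_le_abs_sub (ha : 0 < a) (hb : 0 < b) (hab : 1 ≤ |a - b|) :
    Rminus a b = -((1 / 2) ^ (a + b) / (min a b * betaFn a b)) := by
  rcases le_abs.1 hab with hba | hab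
  · rw [Rminus_of_add_one_le hb (by linarith), min_eq_right (by linarith)]
  · rw [Rminus_comm ha hb, Rminus_of_add_one_le ha (by linarith), min_eq_left (by linarith),
      betaFn_comm hb ha, add_comm b a]

lemma Rminus_self_pos (ha : 0 < a) : 0 < Rminus a a := by
  have := betaFn_pos ha ha
  rw [Rminus_self ha]
  positivity

lemma Rminus_neg_of_one_le_abs_sub (ha : 0 < a) (hb : 0 < b) (hab : 1 ≤ |a - b|) :
    Rminus a b < 0 := by
  have := betaFn_pos ha hb
  have := lt_min ha hb
  rw [Rminus_of_one_le_abs_sub ha hb hab, neg_lt_zero]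
  positivity

end PessimisticReward

theorem Rminus_eq_general :
    (∀ a b : ℝ, 0 < a → 0 < b → 1 ≤ |a - b| →
      Rminus a b = -((1 / 2 : ℝ) ^ (a + b) / (min a b * betaFn a b))) ∧
    (∀ a : ℝ, 0 < a → Rminus a a = (1 / 2 : ℝ) ^ (2 * a) / (a * betaFn a a)) ∧
    (∀ a b : ℝ, 0 < a → 0 < b → (a = b ∨ 1 ≤ |a - b|) → (0 < Rminus a b ↔ a = b)) := by
  refine ⟨fun _ _ ↦ Rminus_of_one_le_abs_sub, fun _ ↦ Rminus_self, fun a b ha hb hab ↦ ?_⟩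
  constructor
  · exact fun hpos ↦ hab.resolve_right fun hab ↦
      (Rminus_neg_of_one_le_abs_sub ha hb hab).not_gt hpos
  · rintro rfl
    exact Rminus_self_pos ha

lemma one_le_abs_natCast_sub_natCast {a b : ℕ} (hab : a ≠ b) : 1 ≤ |(a : ℝ) - b| := by
  exact_mod_cast Int.one_le_abs (sub_ne_zero.2 (Nat.cast_injective.ne hab : (a : ℤ) ≠ b))

theorem Rminus_eq :
    (∀ a b : ℕ, 0 < a → 0 < b → a ≠ b →
      Rminus a b = -((1 / 2 : ℝ) ^ (a + b) / (min (a : ℝ) (b : ℝ) * betaFn a b))) ∧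
    (∀ a : ℕ, 0 < a → Rminus a a = (1 / 2 : ℝ) ^ (2 * a) / (a * betaFn a a)) ∧
    (∀ a b : ℕ, 0 < a → 0 < b → (0 < Rminus a b ↔ a = b)) := by
  obtain ⟨hne, hself, hpos⟩ := Rminus_eq_general
  refine ⟨fun a b ha hb hab ↦ ?_, fun a ha ↦ ?_, fun a b ha hb ↦ ?_⟩
  · exact_mod_cast hne a b (mod_cast ha) (mod_cast hb) (one_le_abs_natCast_sub_natCast hab)
  · exact_mod_cast hself a (mod_cast ha)
  · exact_mod_cast hpos a b (mod_cast ha) (mod_cast hb)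
      ((eq_or_ne a b).imp (congrArg _) one_le_abs_natCast_sub_natCast)
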